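/- Let (Θ, 𝒜, π) be a probability measure space, L_D : Θ → ℝ≥0 measurable and π-integrable with Z = ∫_Θ L_D dπ ∈ (0, ∞), and let π_D = π.withDensity(L_D/Z) be the posterior. Let 𝒰 be a finite nonempty set of candidate actions (unlabeled points) and for each a ∈ 𝒰 let L_a : Θ → ℝ≥0 be measurable with L_a · L_D π-integrable, where L_a(θ) is the pseudo-label likelihood of augmenting D by the point a with its pseudo-label. Then an action a* ∈ 𝒰 maximizes the Bayes criterion Φ(a, π_D) = ∫_Θ L_a(θ) dπ_D(θ) over 𝒰 if and only if a* maximizes the pseudo posterior predictive a ↦ (1/Z) ∫_Θ L_a(θ) L_D(θ) dπ(θ) over 𝒰; consequently, a Bayes-optimal selection in pseudo-label selection is exactly a maximizer of the pseudo posterior predictive, and such a maximizer exists since 𝒰 is finite and nonempty. -/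

import Mathlib

open MeasureTheory

/-- **Bayes-optimal pseudo-label selection maximizes the pseudo posterior
predictive.** Let `(Θ, 𝒜, π)` be a probability measure space, `L_D : Θ → ℝ≥0`
measurable and `π`-integrable with `Z = ∫ L_D dπ ∈ (0, ∞)`, and
`π_D = π.withDensity (L_D / Z)` the posterior. Let `𝒰` be a finite nonempty set
of candidate actions (unlabeled points) and for each `a ∈ 𝒰` let
`L a : Θ → ℝ≥0` be measurable with `L a * L_D` `π`-integrable, `L a θ` being the
pseudo-label likelihood of augmenting `D` by `a` with its pseudo-label. Then
`a* ∈ 𝒰` maximizes the Bayes criterion `Φ(a, π_D) = ∫ L a dπ_D` over `𝒰` iff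
`a*` maximizes the pseudo posterior predictive
`a ↦ (1/Z) ∫ L a · L_D dπ` over `𝒰`; moreover a maximizer of the Bayes
criterion exists since `𝒰` is finite and nonempty. -/
theorem bayes_optimal_iff_max_pseudo_posterior_predictive
    {Θ : Type*} [MeasurableSpace Θ] (π : Measure Θ) [IsProbabilityMeasure π]
    -- likelihood of the labeled data `D` and normalizing constant
    (L_D : Θ → NNReal) (hLDmeas : Measurable L_D)
    (hLDint : Integrable (fun θ => (L_D θ : ℝ)) π)
    (Z : NNReal) (hZpos : 0 < Z) (hZ : ∫ θ, (L_D θ : ℝ) ∂π = (Z : ℝ))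
    -- posterior `π_D` with density `L_D / Z` with respect to `π`
    (π_D : Measure Θ)
    (hπD : π_D = π.withDensity (fun θ => ((L_D θ / Z : NNReal) : ENNReal)))
    -- finite nonempty set of candidate actions (unlabeled points)
    {A : Type*} (𝒰 : Finset A) (h𝒰 : 𝒰.Nonempty)
    -- pseudo-label likelihoods of the candidate actions
    (L : A → Θ → NNReal) (hLmeas : ∀ a ∈ 𝒰, Measurable (L a))
    (hLLDint : ∀ a ∈ 𝒰, Integrable (fun θ => (L a θ : ℝ) * (L_D θ : ℝ)) π) :
    (∀ astar ∈ 𝒰,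
        ((∀ a ∈ 𝒰, ∫ θ, (L a θ : ℝ) ∂π_D ≤ ∫ θ, (L astar θ : ℝ) ∂π_D) ↔
          (∀ a ∈ 𝒰,
            (1 / (Z : ℝ)) * ∫ θ, (L a θ : ℝ) * (L_D θ : ℝ) ∂π ≤
              (1 / (Z : ℝ)) * ∫ θ, (L astar θ : ℝ) * (L_D θ : ℝ) ∂π))) ∧
      ∃ astar ∈ 𝒰,
        ∀ a ∈ 𝒰, ∫ θ, (L a θ : ℝ) ∂π_D ≤ ∫ θ, (L astar θ : ℝ) ∂π_D := by
  -- Change of density: the Bayes criterion and the pseudo posterior predictive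
  -- are the same function of the action.
  have key : ∀ a, ∫ θ, (L a θ : ℝ) ∂π_D =
      (1 / (Z : ℝ)) * ∫ θ, (L a θ : ℝ) * (L_D θ : ℝ) ∂π := by
    intro a
    rw [hπD, integral_withDensity_eq_integral_smul (hLDmeas.div_const Z),
      ← integral_const_mul]
    congr 1 with θ
    rw [NNReal.smul_def, smul_eq_mul, NNReal.coe_div]
    ring
  refine ⟨fun astar _ => by simp only [key], ?_⟩
  exact 𝒰.exists_max_image (fun a => ∫ θ, (L a θ : ℝ) ∂π_D) h𝒰
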